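/- Let p be a prime number. For any n ∈ ℕ and any cyclic subgroup H of (ℤ/p^nℤ)ˣ of order |H| ≥ max(p,3), there exists a number a ∈ ℕ \ pℕ with a ≠ 1 such that ℕ ∩ π_n^{-1}(H) = cl(a^ℕ), the closure of a^ℕ in the p-adic topology on ℕ \ pℕ; in particular ℕ ∩ π_n^{-1}(H) ∈ 𝒳_p. -/

import Mathlib

/-!
A positive integer `y` prime to `p` lies in `cl(a^ℕ)` iff, for every `m`, its class lies in the
subgroup of `(ℤ/p^mℤ)ˣ` generated by `a`. Hence `cl(a^ℕ)` is the preimage of `H` as soon as `a`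
generates the full preimage `H_m` of `H` in `(ℤ/p^mℤ)ˣ` for every `m ≥ n`. It is enough that `a`
generates `H_{n+1}`: then some power of `a` is `1 + p^n u` with `p ∤ u`, and such an element has
order `p^(m-n)` modulo `p^m`, so it generates the kernel of `(ℤ/p^mℤ)ˣ → (ℤ/p^nℤ)ˣ`.

It remains to see that `H_{n+1}` is cyclic. For odd `p` every subgroup of `(ℤ/p^(n+1)ℤ)ˣ` is. For
`p = 2` the quotient `(ℤ/2^mℤ)ˣ / {±1}` is cyclic, generated by `5`, and any subgroup avoiding `-1`
embeds into it; a cyclic `H` of order at least `3` avoids `-1`, which would otherwise be a square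
in `H` and hence modulo `4`.
-/

open TopologicalSpace

/-- The arithmetic progression `a + bℕ₀ = {a + b*n : n ≥ 0}` inside the positive integers. -/
def golombBasic (a b : ℕ) : Set ℕ+ := {x : ℕ+ | ∃ n : ℕ, (x : ℕ) = a + b * n}

/-- The Golomb topology on the positive integers, generated by the arithmetic
progressions `a + bℕ₀` with coprime `a, b ∈ ℕ`. -/
instance golombTopology : TopologicalSpace ℕ+ :=
  generateFrom {S : Set ℕ+ | ∃ a b : ℕ, 0 < a ∧ 0 < b ∧ Nat.Coprime a b ∧ S = golombBasic a b}

/-- The positive integers not divisible by `p` (the set `ℕ \ pℕ`). -/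
abbrev Np (p : ℕ) : Type := {x : ℕ+ // ¬ p ∣ (x : ℕ)}

/-- The `p`-adic topology on `ℕ \ pℕ`, generated by the traces of the sets
`x + p^nℕ₀`, `x, n ∈ ℕ`. -/
def padicTop (p : ℕ) : TopologicalSpace (Np p) :=
  generateFrom {S : Set (Np p) | ∃ x n : ℕ, 0 < x ∧ 0 < n ∧
    S = {y : Np p | ∃ k : ℕ, ((y : ℕ+) : ℕ) = x + p ^ n * k}}

/-- Closure of a set of positive integers in the `p`-adic topology on `ℕ \ pℕ`,
viewed again as a set of positive integers. -/
def padicClosure (p : ℕ) (A : Set ℕ+) : Set ℕ+ :=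
  Subtype.val '' (@closure (Np p) (padicTop p) (Subtype.val ⁻¹' A))

/-- `a^ℕ = {a^k : k ∈ ℕ}`, the set of positive powers of `a`. -/
def powSet (a : ℕ) : Set ℕ+ := {y : ℕ+ | ∃ k : ℕ, 0 < k ∧ (y : ℕ) = a ^ k}

/-- The closure of `a^ℕ` in the `p`-adic topology on `ℕ \ pℕ`. -/
def clPow (p a : ℕ) : Set ℕ+ := padicClosure p (powSet a)

/-- The family `𝒳_p` of closures of the sets `a^ℕ` for `a ∈ ℕ \ pℕ`, `a ≠ 1`. -/
def XX (p : ℕ) : Set (Set ℕ+) := {X | ∃ a : ℕ, 0 < a ∧ a ≠ 1 ∧ ¬ p ∣ a ∧ X = clPow p a}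

/-- The projection `π_n(X)` of a set of positive integers to `ℤ/p^nℤ`. -/
def pin (p n : ℕ) (X : Set ℕ+) : Set (ZMod (p ^ n)) :=
  (fun y : ℕ+ => ((y : ℕ) : ZMod (p ^ n))) '' X

/-- `n(X)`: the least `n ∈ ℕ` with `X = ℕ ∩ π_n⁻¹(π_n(X))` and `|π_n(X)| ≥ max(p,3)`. -/
noncomputable def nX (p : ℕ) (X : Set ℕ+) : ℕ :=
  sInf {n : ℕ | 0 < n ∧ X = {y : ℕ+ | ((y : ℕ) : ZMod (p ^ n)) ∈ pin p n X} ∧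
    max p 3 ≤ (pin p n X).ncard}

/-- `i(X)`: the index of the subgroup `π_{n(X)}(X)` in the group of units of `ℤ/p^{n(X)}ℤ`. -/
noncomputable def iX (p : ℕ) (X : Set ℕ+) : ℕ :=
  Nat.card ((ZMod (p ^ nX p X))ˣ) / (pin p (nX p X) X).ncard

theorem hasBasis_nhds_padicTop {p : ℕ} (hp : 1 < p) (y : Np p) :
    (@nhds (Np p) (padicTop p) y).HasBasis (fun _ : ℕ => True)
      fun m => {z | (z : ℕ) ≡ (y : ℕ) [MOD p ^ m]} := by
  have hanti : Antitone fun m : ℕ => {z : Np p | (z : ℕ) ≡ (y : ℕ) [MOD p ^ m]} :=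
    fun i j hij z hz => Nat.ModEq.of_dvd (pow_dvd_pow p hij) hz
  suffices hnhds : @nhds (Np p) (padicTop p) y =
      ⨅ m : ℕ, Filter.principal {z : Np p | (z : ℕ) ≡ (y : ℕ) [MOD p ^ m]} by
    rw [hnhds]
    exact Filter.hasBasis_iInf_principal hanti.directed_ge
  refine nhds_generateFrom.trans (le_antisymm (le_iInf fun m => ?_) (le_iInf₂ ?_))
  · refine iInf₂_le_of_le {z : Np p | ∃ k : ℕ, (z : ℕ) = y + p ^ (m + 1) * k}
      ⟨⟨0, rfl⟩, y, m + 1, y.1.pos, m.succ_pos, rfl⟩ (Filter.principal_mono.2 ?_)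
    rintro z ⟨k, hk⟩
    refine Nat.ModEq.of_dvd (pow_dvd_pow p m.le_succ) ?_
    simp [hk, Nat.ModEq]
  · rintro S ⟨hyS, x, n, -, -, rfl⟩
    obtain ⟨j, hj⟩ := hyS
    -- Modulo `p ^ (y + n) > y`, only numbers `≥ y` are congruent to `y`.
    refine iInf_le_of_le ((y : ℕ) + n) (Filter.principal_mono.2 fun z hz => ?_)
    have hy_lt : (y : ℕ) < p ^ ((y : ℕ) + n) := (Nat.lt_pow_self hp).trans_le
      (Nat.pow_le_pow_right hp.le (Nat.le_add_right _ _))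
    have hyz : (y : ℕ) ≤ z := by
      rw [← Nat.mod_eq_of_lt hy_lt, ← show _ = _ from hz]
      exact Nat.mod_le _ _
    have hxz : x ≡ z [MOD p ^ n] :=
      calc x ≡ y [MOD p ^ n] := by simp [hj, Nat.ModEq]
        _ ≡ z [MOD p ^ n] := (Nat.ModEq.of_dvd (pow_dvd_pow p (Nat.le_add_left n _)) hz).symm
    obtain ⟨k, hk⟩ := (Nat.modEq_iff_dvd' (by omega)).1 hxz
    exact ⟨k, by omega⟩

theorem mem_padicClosure_iff {p : ℕ} (hp : 1 < p) {A : Set ℕ+} {y : ℕ+} :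
    y ∈ padicClosure p A ↔ ¬ p ∣ (y : ℕ) ∧ ∀ m : ℕ, ∃ x ∈ A, (x : ℕ) ≡ y [MOD p ^ m] := by
  let := padicTop p
  have hclosure (hy : ¬ p ∣ (y : ℕ)) := mem_closure_iff_nhds_basis (t := Subtype.val ⁻¹' A)
    (hasBasis_nhds_padicTop hp ⟨y, hy⟩)
  constructor
  · rintro ⟨⟨y, hy⟩, hcl, rfl⟩
    refine ⟨hy, fun m => ?_⟩
    obtain ⟨x, hxA, hxy⟩ := (hclosure hy).1 hcl m trivial
    exact ⟨x, hxA, hxy⟩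
  · rintro ⟨hy, happrox⟩
    refine ⟨⟨y, hy⟩, (hclosure hy).2 fun m _ => ?_, rfl⟩
    obtain ⟨x, hxA, hxy⟩ := happrox (m + 1)
    have hx : ¬ p ∣ (x : ℕ) := fun hpx =>
      hy ((hxy.dvd_iff (dvd_pow_self p m.succ_ne_zero)).1 hpx)
    exact ⟨⟨x, hx⟩, hxA, hxy.of_dvd (pow_dvd_pow p m.le_succ)⟩

/-- The class of `a` in `(ℤ/p^mℤ)ˣ`, for `a` coprime to `p`; it is also defined for `m = 0`, where
the group is trivial. -/
def unitModPow {p a : ℕ} (ha : a.Coprime p) (m : ℕ) : (ZMod (p ^ m))ˣ :=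
  ZMod.unitOfCoprime a (ha.pow_right m)

section unitModPow

variable {p a : ℕ}

theorem coe_unitModPow (ha : a.Coprime p) (m : ℕ) :
    (unitModPow ha m : ZMod (p ^ m)) = a :=
  ZMod.coe_unitOfCoprime a _

theorem unitsMap_unitModPow (ha : a.Coprime p) {n m : ℕ} (hnm : n ≤ m) :
    ZMod.unitsMap (pow_dvd_pow p hnm) (unitModPow ha m) = unitModPow ha n := by
  ext
  rw [ZMod.unitsMap_val, coe_unitModPow, coe_unitModPow, ZMod.cast_natCast (pow_dvd_pow p hnm)]

theorem exists_unit_eq_natCast_iff {n : ℕ} (hn : n ≠ 0) {H : Subgroup (ZMod (p ^ n))ˣ} {y : ℕ} :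
    (∃ u : (ZMod (p ^ n))ˣ, u ∈ H ∧ (y : ZMod (p ^ n)) = u) ↔
      ∃ hy : y.Coprime p, unitModPow hy n ∈ H := by
  constructor
  · rintro ⟨u, hu, hyu⟩
    have hy_pow : y.Coprime (p ^ n) := (ZMod.isUnit_iff_coprime y (p ^ n)).1 (hyu ▸ u.isUnit)
    have hy : y.Coprime p := hy_pow.coprime_dvd_right (dvd_pow_self p hn)
    have hy_eq : unitModPow hy n = u := Units.ext ((coe_unitModPow hy n).trans hyu)
    exact ⟨hy, hy_eq ▸ hu⟩
  · rintro ⟨hy, hyH⟩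
    exact ⟨unitModPow hy n, hyH, (coe_unitModPow hy n).symm⟩

theorem unitModPow_mem_zpowers_of_le {b : ℕ} (ha : a.Coprime p) (hb : b.Coprime p) {n m : ℕ}
    (hnm : n ≤ m) (hmem : unitModPow hb m ∈ Subgroup.zpowers (unitModPow ha m)) :
    unitModPow hb n ∈ Subgroup.zpowers (unitModPow ha n) := by
  have := Subgroup.mem_map_of_mem (ZMod.unitsMap (pow_dvd_pow p hnm)) hmem
  rwa [MonoidHom.map_zpowers, unitsMap_unitModPow ha hnm, unitsMap_unitModPow hb hnm] at this

variable [hp : Fact p.Prime]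

theorem mem_clPow_iff (ha : a.Coprime p) (ha0 : 0 < a) {y : ℕ+} :
    y ∈ clPow p a ↔ ∃ hy : (y : ℕ).Coprime p,
      ∀ m, unitModPow hy m ∈ Subgroup.zpowers (unitModPow ha m) := by
  rw [clPow, mem_padicClosure_iff hp.out.one_lt, ← hp.out.coprime_iff_not_dvd, Nat.coprime_comm,
    ← exists_prop]
  refine exists_congr fun hy => forall_congr' fun m => ?_
  have hpow (k : ℕ) :
      unitModPow ha m ^ k = unitModPow hy m ↔ a ^ k ≡ y [MOD p ^ m] := by
    rw [← Units.val_inj, Units.val_pow_eq_pow_val, coe_unitModPow, coe_unitModPow, ← Nat.cast_pow,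
      ZMod.natCast_eq_natCast_iff]
  constructor
  · rintro ⟨x, ⟨k, -, hk⟩, hxy⟩
    exact ⟨k, by simpa using (hpow k).2 (hk ▸ hxy)⟩
  · intro hmem
    obtain ⟨k, hk⟩ := mem_powers_iff_mem_zpowers.2 hmem
    have hpos := orderOf_pos (unitModPow ha m)
    have hk' : unitModPow ha m ^ (k + orderOf (unitModPow ha m)) = unitModPow hy m := by
      rw [pow_add, pow_orderOf_eq_one, mul_one]
      exact hk
    exact ⟨⟨a ^ (k + orderOf (unitModPow ha m)), pow_pos ha0 _⟩, ⟨_, by omega, rfl⟩,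
      (hpow _).1 hk'⟩

theorem exists_zpowers_unitModPow_eq {m : ℕ} (hm : m ≠ 0) (K : Subgroup (ZMod (p ^ m))ˣ)
    [IsCyclic K] :
    ∃ a : ℕ, 1 < a ∧ ∃ ha : a.Coprime p, Subgroup.zpowers (unitModPow ha m) = K := by
  obtain ⟨g, rfl⟩ := (Subgroup.isCyclic_iff_exists_zpowers_eq_top K).1 ‹_›
  have hg : (((g : ZMod (p ^ m)).val + p ^ m : ℕ) : ZMod (p ^ m)) = g := by simp
  obtain ⟨ha, _⟩ := (exists_unit_eq_natCast_iff (H := ⊤) hm).1 ⟨g, trivial, hg⟩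
  refine ⟨_, Nat.lt_add_left _ (Nat.one_lt_pow hm hp.out.one_lt), ha, ?_⟩
  rw [show unitModPow ha m = g from Units.ext ((coe_unitModPow ha m).trans hg)]

end unitModPow

theorem card_ker_unitsMap_mul_totient {N M : ℕ} [NeZero M] (h : N ∣ M) :
    Nat.card (ZMod.unitsMap h).ker * N.totient = M.totient := by
  have : NeZero N := ⟨ne_zero_of_dvd_ne_zero (NeZero.ne M) h⟩
  have hindex := (ZMod.unitsMap h).ker.card_mul_index
  rwa [Subgroup.index_ker, MonoidHom.range_eq_top.2 (ZMod.unitsMap_surjective h),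
    Subgroup.card_top, Nat.card_eq_fintype_card (α := (ZMod N)ˣ),
    Nat.card_eq_fintype_card (α := (ZMod M)ˣ), ZMod.card_units_eq_totient,
    ZMod.card_units_eq_totient] at hindex

section Generators

variable {p : ℕ} [hp : Fact p.Prime] {n m : ℕ}

theorem card_ker_unitsMap_prime_pow (hn : n ≠ 0) (hnm : n ≤ m) :
    Nat.card (ZMod.unitsMap (pow_dvd_pow p hnm)).ker = p ^ (m - n) := by
  have hcard := card_ker_unitsMap_mul_totient (pow_dvd_pow p hnm)
  have htot : (p ^ m).totient = p ^ (m - n) * (p ^ n).totient := by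
    rw [Nat.totient_prime_pow hp.out (by omega), Nat.totient_prime_pow hp.out (by omega),
      ← mul_assoc, ← pow_add]
    congr 2
    omega
  exact Nat.eq_of_mul_eq_mul_right (Nat.totient_pos.2 (pow_pos hp.out.pos n)) (hcard.trans htot)

/-- The inequality `n + 2 ≤ p * n` says that `n ≥ 1`, and that `n ≥ 2` if `p = 2`. -/
theorem zpowers_eq_ker_unitsMap (hpn : n + 2 ≤ p * n) (hnm : n ≤ m) {g : (ZMod (p ^ m))ˣ} {u : ℤ}
    (hu : ¬ (p : ℤ) ∣ u) (hg : (g : ZMod (p ^ m)) = 1 + p ^ n * u) :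
    Subgroup.zpowers g = (ZMod.unitsMap (pow_dvd_pow p hnm)).ker := by
  have hn : n ≠ 0 := by rintro rfl; omega
  have hker : g ∈ (ZMod.unitsMap (pow_dvd_pow p hnm)).ker := by
    have hpn0 : (p : ZMod (p ^ n)) ^ n = 0 := by exact_mod_cast ZMod.natCast_self (p ^ n)
    rw [MonoidHom.mem_ker, ZMod.unitsMap_def]
    ext
    simp only [Units.coe_map, MonoidHom.coe_coe, hg, map_add, map_one, map_mul, map_pow,
      map_natCast, hpn0, zero_mul, add_zero, Units.val_one]
  have horder : orderOf g = p ^ (m - n) := by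
    obtain ⟨k, rfl⟩ := Nat.exists_eq_add_of_le' hnm
    rw [← orderOf_units, hg, ZMod.orderOf_one_add_mul_prime_pow hp.out n hn hpn u hu,
      Nat.add_sub_cancel]
  refine Subgroup.eq_of_le_of_card_ge (Subgroup.zpowers_le.2 hker) ?_
  rw [card_ker_unitsMap_prime_pow hn hnm, Nat.card_zpowers, horder]

theorem ker_unitsMap_le_zpowers {a : ℕ} (ha : a.Coprime p) (hpn : n + 2 ≤ p * n)
    (hker : (ZMod.unitsMap (pow_dvd_pow p n.le_succ)).ker ≤
      Subgroup.zpowers (unitModPow ha (n + 1))) (hnm : n ≤ m) :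
    (ZMod.unitsMap (pow_dvd_pow p hnm)).ker ≤ Subgroup.zpowers (unitModPow ha m) := by
  have hn : n ≠ 0 := by rintro rfl; omega
  have hcop : (1 + p ^ n).Coprime p := by
    obtain ⟨k, rfl⟩ := Nat.exists_eq_add_one_of_ne_zero hn
    simp [pow_succ]
  have hmem : unitModPow hcop (n + 1) ∈ (ZMod.unitsMap (pow_dvd_pow p n.le_succ)).ker := by
    rw [MonoidHom.mem_ker, unitsMap_unitModPow hcop n.le_succ]
    ext
    rw [coe_unitModPow]
    simp
  obtain ⟨k, hk⟩ := mem_powers_iff_mem_zpowers.2 (hker hmem)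
  have hmod : 1 + p ^ n ≡ a ^ k [MOD p ^ (n + 1)] := by
    rw [← ZMod.natCast_eq_natCast_iff, ← coe_unitModPow hcop, ← hk]
    simp [coe_unitModPow]
  obtain ⟨t, ht⟩ := Nat.modEq_iff_dvd.1 hmod
  have hunit : ¬ (p : ℤ) ∣ 1 + p * t := by
    rw [dvd_add_left (dvd_mul_right _ _)]
    exact (Nat.prime_iff_prime_int.1 hp.out).not_dvd_one
  have hpow : (a : ℤ) ^ k = 1 + p ^ n * (1 + p * t) := by
    push_cast at ht
    linear_combination ht
  rw [← zpowers_eq_ker_unitsMap hpn hnm (g := unitModPow ha m ^ k) hunit (by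
    rw [Units.val_pow_eq_pow_val, coe_unitModPow]
    exact_mod_cast congrArg (Int.cast : ℤ → ZMod (p ^ m)) hpow)]
  exact Subgroup.zpowers_le.2 (Subgroup.npow_mem_zpowers _ k)

theorem comap_unitsMap_eq_zpowers {a : ℕ} (ha : a.Coprime p) (hpn : n + 2 ≤ p * n)
    {H : Subgroup (ZMod (p ^ n))ˣ}
    (hgen : Subgroup.zpowers (unitModPow ha (n + 1)) =
      H.comap (ZMod.unitsMap (pow_dvd_pow p n.le_succ))) (hnm : n ≤ m) :
    H.comap (ZMod.unitsMap (pow_dvd_pow p hnm)) = Subgroup.zpowers (unitModPow ha m) := by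
  have hH : Subgroup.zpowers (unitModPow ha n) = H := by
    rw [← unitsMap_unitModPow ha n.le_succ, ← MonoidHom.map_zpowers, hgen,
      Subgroup.map_comap_eq_self_of_surjective (ZMod.unitsMap_surjective _)]
  rw [← hH, ← unitsMap_unitModPow ha hnm, ← MonoidHom.map_zpowers, Subgroup.comap_map_eq_self]
  refine ker_unitsMap_le_zpowers ha hpn ?_ hnm
  rw [hgen]
  exact MonoidHom.ker_le_comap _ _

end Generators

theorem eq_one_or_neg_one_of_mem_zpowers {G : Type*} [Group G] [HasDistribNeg G] {x : G}
    (hx : x ∈ Subgroup.zpowers (-1 : G)) : x = 1 ∨ x = -1 := by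
  have hfin : IsOfFinOrder (-1 : G) := isOfFinOrder_iff_pow_eq_one.2 ⟨2, two_pos, neg_one_sq⟩
  obtain ⟨k, rfl⟩ := hfin.mem_powers_iff_mem_zpowers.2 hx
  exact neg_one_pow_eq_or G k

theorem unitsMap_neg_one {N M : ℕ} (h : N ∣ M) : ZMod.unitsMap h (-1) = -1 := by
  ext
  simp [ZMod.unitsMap_def]

theorem isCyclic_units_two_pow_quotient_neg_one {m : ℕ} (hm : 2 ≤ m) :
    IsCyclic ((ZMod (2 ^ m))ˣ ⧸ Subgroup.zpowers (-1 : (ZMod (2 ^ m))ˣ)) := by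
  have : Fact (Nat.Prime 2) := ⟨Nat.prime_two⟩
  let toQuotient := QuotientGroup.mk' (Subgroup.zpowers (-1 : (ZMod (2 ^ m))ˣ))
  let five := unitModPow (show Nat.Coprime 5 2 by decide) m
  have hfive : Subgroup.zpowers five = (ZMod.unitsMap (pow_dvd_pow 2 hm)).ker :=
    zpowers_eq_ker_unitsMap (u := 1) (by norm_num) hm (by norm_num)
      (by rw [coe_unitModPow]; norm_num)
  have hmod4 (u : (ZMod (2 ^ 2))ˣ) : u = 1 ∨ u = -1 := by revert u; decide
  have hneg (x : (ZMod (2 ^ m))ˣ) : toQuotient (-x) = toQuotient x :=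
    QuotientGroup.eq.2 (by simp)
  refine isCyclic_of_surjective (toQuotient.comp (Subgroup.zpowers five).subtype) fun q => ?_
  obtain ⟨x, rfl⟩ := QuotientGroup.mk'_surjective _ q
  rcases hmod4 (ZMod.unitsMap (pow_dvd_pow 2 hm) x) with hx | hx
  · exact ⟨⟨x, hfive ▸ hx⟩, rfl⟩
  · refine ⟨⟨-x, ?_⟩, hneg x⟩
    rw [hfive, MonoidHom.mem_ker, ← neg_one_mul, map_mul, hx, unitsMap_neg_one, neg_mul_neg,
      one_mul]

theorem isCyclic_of_neg_one_notMem {p m : ℕ} (hp : p.Prime) {K : Subgroup (ZMod (p ^ m))ˣ}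
    (hK : p = 2 → -1 ∉ K) : IsCyclic K := by
  by_cases hp2 : p = 2
  · subst hp2
    rcases le_total m 2 with hm | hm
    · have := (ZMod.isCyclic_units_two_pow_iff m).2 hm
      infer_instance
    have := isCyclic_units_two_pow_quotient_neg_one hm
    refine isCyclic_of_injective ((QuotientGroup.mk' (Subgroup.zpowers (-1))).comp K.subtype)
      ((injective_iff_map_eq_one _).2 fun x hx => ?_)
    rcases eq_one_or_neg_one_of_mem_zpowers ((QuotientGroup.eq_one_iff _).1 hx) with h | h
    · exact Subtype.ext h
    · exact absurd (h ▸ x.2) (hK rfl)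
  · have := ZMod.isCyclic_units_of_prime_pow p hp hp2 m
    infer_instance

theorem two_le_and_four_dvd_of_dvd_totient_two_pow {n N : ℕ} (hN : 3 ≤ N)
    (hdvd : N ∣ (2 ^ n).totient) : 2 ≤ n ∧ 4 ∣ N := by
  have hn : n ≠ 0 := by
    rintro rfl
    exact absurd (Nat.le_of_dvd one_pos hdvd) (by omega)
  rw [Nat.totient_prime_pow Nat.prime_two (Nat.pos_of_ne_zero hn), Nat.add_one_sub_one, mul_one,
    Nat.dvd_prime_pow Nat.prime_two] at hdvd
  obtain ⟨i, hin, rfl⟩ := hdvd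
  have hi : 2 ≤ i := by
    by_contra! hi
    interval_cases i <;> omega
  exact ⟨by omega, pow_dvd_pow 2 hi⟩

theorem neg_one_notMem_of_isCyclic {n : ℕ} {H : Subgroup (ZMod (2 ^ n))ˣ} [IsCyclic H]
    (hcard : 3 ≤ Nat.card H) : -1 ∉ H := by
  intro hneg
  have hdvd : Nat.card H ∣ (2 ^ n).totient := by
    rw [← ZMod.card_units_eq_totient, ← Nat.card_eq_fintype_card]
    exact H.card_subgroup_dvd_card
  obtain ⟨hn, h4⟩ := two_le_and_four_dvd_of_dvd_totient_two_pow hcard hdvd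
  obtain ⟨g, rfl⟩ := (Subgroup.isCyclic_iff_exists_zpowers_eq_top H).1 ‹_›
  obtain ⟨k, hk : g ^ k = -1⟩ := mem_powers_iff_mem_zpowers.2 hneg
  have horder : orderOf g ∣ k * 2 := orderOf_dvd_of_pow_eq_one (by rw [pow_mul, hk, neg_one_sq])
  obtain ⟨j, rfl⟩ : 2 ∣ k := by
    have h4k : 4 ∣ k * 2 := (Nat.card_zpowers g ▸ h4).trans horder
    omega
  have hsq : ZMod.unitsMap (pow_dvd_pow 2 hn) (g ^ j) ^ 2 = -1 := by
    rw [← map_pow, ← pow_mul', hk, unitsMap_neg_one]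
  have hmod4 (x : (ZMod (2 ^ 2))ˣ) : x ^ 2 ≠ -1 := by revert x; decide
  exact hmod4 _ hsq

theorem add_two_le_mul_of_neg_one_notMem {p n : ℕ} (hp : p.Prime) (hn : n ≠ 0)
    {H : Subgroup (ZMod (p ^ n))ˣ} (hH : p = 2 → -1 ∉ H) : n + 2 ≤ p * n := by
  by_cases hp2 : p = 2
  · subst hp2
    have hn1 : n ≠ 1 := by
      rintro rfl
      have : (-1 : (ZMod (2 ^ 1))ˣ) = 1 := by decide
      exact hH rfl (this ▸ H.one_mem)
    omega
  · have : 3 ≤ p := hp.two_le.lt_of_ne' hp2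
    nlinarith [Nat.pos_of_ne_zero hn]

theorem preimage_cyclic_mem_XX_general (p : ℕ) (hp : p.Prime) (n : ℕ) (hn : 0 < n)
    (H : Subgroup ((ZMod (p ^ n))ˣ)) (hH : p = 2 → -1 ∉ H) :
    {y : ℕ+ | ∃ u : (ZMod (p ^ n))ˣ, u ∈ H ∧ ((y : ℕ) : ZMod (p ^ n)) = (u : ZMod (p ^ n))}
      ∈ XX p := by
  have : Fact p.Prime := ⟨hp⟩
  have hpn := add_two_le_mul_of_neg_one_notMem hp hn.ne' hH
  have hlift : p = 2 → -1 ∉ H.comap (ZMod.unitsMap (pow_dvd_pow p n.le_succ)) := by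
    rwa [Subgroup.mem_comap, unitsMap_neg_one]
  have := isCyclic_of_neg_one_notMem hp hlift
  obtain ⟨a, ha1, ha, hgen⟩ := exists_zpowers_unitModPow_eq n.succ_ne_zero
    (H.comap (ZMod.unitsMap (pow_dvd_pow p n.le_succ)))
  refine ⟨a, by omega, by omega, hp.coprime_iff_not_dvd.1 ha.symm, ?_⟩
  ext y
  rw [Set.mem_ofPred_eq, exists_unit_eq_natCast_iff hn.ne', mem_clPow_iff ha (by omega)]
  refine exists_congr fun hy => ?_
  have hmem {m : ℕ} (hnm : n ≤ m) :
      unitModPow hy m ∈ Subgroup.zpowers (unitModPow ha m) ↔ unitModPow hy n ∈ H := by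
    rw [← comap_unitsMap_eq_zpowers ha hpn hgen hnm, Subgroup.mem_comap,
      unitsMap_unitModPow hy hnm]
  exact ⟨fun hyH m => unitModPow_mem_zpowers_of_le ha hy (Nat.le_add_left m n)
    ((hmem (Nat.le_add_right n m)).2 hyH), fun hall => (hmem le_rfl).1 (hall n)⟩

/-- For any `n ∈ ℕ` and any cyclic subgroup `H` of `(ℤ/p^nℤ)ˣ` of order at least
`max(p,3)`, there is `a ∈ ℕ \ pℕ`, `a ≠ 1`, with `ℕ ∩ π_n⁻¹(H) = cl(a^ℕ)`; in
particular `ℕ ∩ π_n⁻¹(H) ∈ 𝒳_p`. -/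
theorem preimage_cyclic_mem_XX (p : ℕ) (hp : p.Prime) (n : ℕ) (hn : 0 < n)
    (H : Subgroup ((ZMod (p ^ n))ˣ)) (hc : IsCyclic H) (hcard : max p 3 ≤ Nat.card H) :
    (∃ a : ℕ, 0 < a ∧ a ≠ 1 ∧ ¬ p ∣ a ∧
      {y : ℕ+ | ∃ u : (ZMod (p ^ n))ˣ, u ∈ H ∧ ((y : ℕ) : ZMod (p ^ n)) = (u : ZMod (p ^ n))}
        = clPow p a) ∧
    {y : ℕ+ | ∃ u : (ZMod (p ^ n))ˣ, u ∈ H ∧ ((y : ℕ) : ZMod (p ^ n)) = (u : ZMod (p ^ n))}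
      ∈ XX p := by
  have hmem := preimage_cyclic_mem_XX_general p hp n hn H fun hp2 => by
    subst hp2; exact neg_one_notMem_of_isCyclic (le_of_max_le_right hcard)
  exact ⟨hmem, hmem⟩
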